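/- arXiv:math/9909097 — 4 statements merged into one kernel-verified Lean document; each statement's English description precedes it below -/
import Mathlib

section
/- Let α > 0. Every Borel probability measure μ on ℝ with μ([0, M_α]) = 1 and μ = (1/2)·(T_0)_*μ + (1/2)·(T_α)_*μ has no atoms: μ({s}) = 0 for every s ∈ ℝ. In particular, μ_α is atomless for every α > 0. -/
/-!
A stationary measure carried by `[0, ∞)` that has an atom has a heaviest atom mass `m`, attained
on a finite nonempty set `F`. Both maps are injective on `[0, ∞)`, so
`m = μ {s} = (μ (T₀⁻¹ {s}) + μ (T_α⁻¹ {s})) / 2` with both terms at most `m` forces, for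
`s ∈ F`, both preimages of `s` to be in `F`. At `s = max F`, the point `u ∈ F` with `T₀ u = s`
satisfies `s = T₀ u ≤ u ≤ s`; since `0` is the only fixed point of `T₀`, `s = 0`. But `0` has no
nonnegative preimage under `T_α`, a contradiction (`real_singleton_eq_zero`).

For `mu α`, the only further point is stationarity. The functional equation
`Y t = T_{X₁(t)} (Y (2 t))` (`Y_eq`) follows from the convergence of the compositions, and the
scaling of Lebesgue measure together with the `1/2`-periodicity of `Y` turns it into the
invariance equation (`volume_Y_preimage`).
-/

open MeasureTheory Filter Set ENNReal

noncomputable def T (a x : ℝ) : ℝ := (x + a) / (1 + x + a)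

noncomputable def M (a : ℝ) : ℝ := (-a + Real.sqrt (a ^ 2 + 4 * a)) / 2

/-- `comp x n s = T_{x 1} ∘ T_{x 2} ∘ ⋯ ∘ T_{x n} (s)`. -/
noncomputable def comp (x : ℕ → ℝ) : ℕ → ℝ → ℝ
  | 0, s => s
  | n + 1, s => comp x n (T (x (n + 1)) s)

/-- An i.i.d. sequence of fair-coin random variables taking values `0` and `α`, realized on
the probability space `[0,1)` with Lebesgue measure via binary digits:
`seq α t i = α` if the binary digit of `t` at position `i` is `1`, and `0` otherwise. -/
noncomputable def seq (α t : ℝ) (i : ℕ) : ℝ :=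
  if Int.fract (2 ^ i * t) < 1 / 2 then 0 else α

/-- The (a.s. defined) limit `Y = lim_n T_{X 1} ∘ ⋯ ∘ T_{X n} (0)`; since the sequence is
nondecreasing and bounded, the limit equals the supremum. -/
noncomputable def Y (α t : ℝ) : ℝ := ⨆ n, comp (seq α t) n 0

/-- `mu α` is the law of the random continued fraction `Y`. -/
noncomputable def mu (α : ℝ) : Measure ℝ :=
  Measure.map (Y α) (volume.restrict (Set.Ico (0 : ℝ) 1))

lemma measurable_T (a : ℝ) : Measurable (T a) := by
  unfold T; fun_prop

lemma T_eq {a x : ℝ} (ha : 0 ≤ a) (hx : 0 ≤ x) : T a x = 1 - 1 / (1 + x + a) := by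
  unfold T
  have : 1 + x + a ≠ 0 := by positivity
  field_simp
  ring

lemma T_nonneg {a x : ℝ} (ha : 0 ≤ a) (hx : 0 ≤ x) : 0 ≤ T a x := by
  unfold T; positivity

lemma T_le_one {a x : ℝ} (ha : 0 ≤ a) (hx : 0 ≤ x) : T a x ≤ 1 := by
  rw [T_eq ha hx]
  have : 0 ≤ 1 / (1 + x + a) := by positivity
  linarith

lemma T_mono {a x y : ℝ} (ha : 0 ≤ a) (hx : 0 ≤ x) (hxy : x ≤ y) : T a x ≤ T a y := by
  rw [T_eq ha hx, T_eq ha (hx.trans hxy)]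
  gcongr

lemma T_inj {a x y : ℝ} (ha : 0 ≤ a) (hx : 0 ≤ x) (hy : 0 ≤ y) (h : T a x = T a y) : x = y := by
  unfold T at h
  have h1 : 1 + x + a ≠ 0 := by positivity
  have h2 : 1 + y + a ≠ 0 := by positivity
  rw [div_eq_div_iff h1 h2] at h
  linarith

lemma continuousAt_T {a x : ℝ} (ha : 0 ≤ a) (hx : 0 ≤ x) : ContinuousAt (T a) x := by
  have h1 : 1 + x + a ≠ 0 := by positivity
  unfold T
  fun_prop (disch := assumption)

/-! ### Stationary measures have no atoms -/

/-- A fibre of `T a` has no more mass than its nonnegative point, and none if it has no such point. -/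
lemma fibre_dichotomy (μ : Measure ℝ) [IsFiniteMeasure μ] (hμ : μ (Iio 0) = 0)
    {a : ℝ} (ha : 0 ≤ a) (s : ℝ) :
    (∃ u, 0 ≤ u ∧ T a u = s ∧ μ.real (T a ⁻¹' {s}) ≤ μ.real {u}) ∨
      μ.real (T a ⁻¹' {s}) = 0 := by
  by_cases h : ∃ u, 0 ≤ u ∧ T a u = s
  · obtain ⟨u, hu, rfl⟩ := h
    refine Or.inl ⟨u, hu, rfl, ?_⟩
    have hsub : T a ⁻¹' {T a u} ⊆ {u} ∪ Iio 0 := by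
      intro x hx
      by_cases h0 : 0 ≤ x
      · exact Or.inl (T_inj ha h0 hu hx)
      · exact Or.inr (not_le.1 h0)
    have h0 : μ.real (Iio 0) = 0 := by simp [Measure.real, hμ]
    have := (measureReal_mono hsub (μ := μ)).trans (measureReal_union_le _ _)
    linarith
  · right
    push Not at h
    have hsub : T a ⁻¹' {s} ⊆ Iio 0 := by
      intro x hx
      by_contra h0
      exact h x (not_lt.1 h0) hx
    simp [Measure.real, measure_mono_null hsub hμ]

lemma real_singleton_eq_zero {α : ℝ} (hα : 0 < α) (μ : Measure ℝ) [IsFiniteMeasure μ]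
    (hμ : μ (Iio 0) = 0)
    (hinv : ∀ s, μ.real {s} =
      1 / 2 * μ.real (T 0 ⁻¹' {s}) + 1 / 2 * μ.real (T α ⁻¹' {s})) (s : ℝ) :
    μ {s} = 0 := by
  by_contra hs
  have hfin : {x : ℝ | μ {s} ≤ μ {x}}.Finite :=
    Measure.finite_const_le_meas_of_disjoint_iUnion μ (pos_iff_ne_zero.2 hs)
      (As := fun x : ℝ => {x}) (fun _ => measurableSet_singleton _)
      (fun x y hxy => by simpa using hxy) (measure_ne_top _ _)
  have hmem : ∀ x, μ.real {s} ≤ μ.real {x} → x ∈ {x : ℝ | μ {s} ≤ μ {x}} := fun x hx =>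
    (ENNReal.toReal_le_toReal (measure_ne_top _ _) (measure_ne_top _ _)).1 hx
  have hspos : 0 < μ.real {s} := ENNReal.toReal_pos hs (measure_ne_top _ _)
  -- `p` is an atom of maximal mass
  obtain ⟨p, -, hp⟩ := exists_max_image _ (fun x : ℝ => μ.real {x}) hfin ⟨s, hmem s le_rfl⟩
  have hsp : μ.real {s} ≤ μ.real {p} := hp s (hmem s le_rfl)
  have hmax : ∀ x, μ.real {x} ≤ μ.real {p} := fun x => by
    by_cases h : μ.real {s} ≤ μ.real {x}
    · exact hp x (hmem x h)
    · linarith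
  have hF : {x : ℝ | μ.real {x} = μ.real {p}}.Finite :=
    hfin.subset fun x hx => hmem x (hsp.trans (le_of_eq hx.symm))
  -- `q` is the largest of the atoms of maximal mass
  obtain ⟨q, hq, hqmax⟩ := exists_max_image _ id hF ⟨p, rfl⟩
  have hq' : μ.real {q} = μ.real {p} := hq
  have key : ∀ a, 0 ≤ a → μ.real (T a ⁻¹' {q}) ≤ μ.real {p} := fun a ha => by
    rcases fibre_dichotomy μ hμ ha q with ⟨u, -, -, h⟩ | h
    · exact h.trans (hmax u)
    · linarith
  have h0 := key 0 le_rfl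
  have h1 := key α hα.le
  have h2 := hinv q
  rcases fibre_dichotomy μ hμ le_rfl q with ⟨u, hu, huq, h⟩ | h
  swap
  · linarith
  rcases fibre_dichotomy μ hμ hα.le q with ⟨v, hv, hvq, h'⟩ | h'
  swap
  · linarith
  have huF : μ.real {u} = μ.real {p} := le_antisymm (hmax u) (by linarith)
  have huq' : u ≤ q := hqmax u huF
  have hqpos : 0 < q := by
    rw [← hvq]; unfold T; positivity
  have : 0 < u := by
    rcases hu.eq_or_lt with rfl | h
    · simp [T] at huq; linarith
    · exact h
  have : q < u := by
    rw [← huq]; unfold T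
    rw [div_lt_iff₀ (by positivity)]
    nlinarith
  linarith

/-! ### The law of the random continued fraction -/

lemma comp_succ' (x : ℕ → ℝ) (n : ℕ) (s : ℝ) :
    comp x (n + 1) s = T (x 1) (comp (fun i => x (i + 1)) n s) := by
  induction n generalizing s with
  | zero => rfl
  | succ n ih => rw [comp, ih, comp]

lemma comp_nonneg {x : ℕ → ℝ} (hx : ∀ i, 0 ≤ x i) (n : ℕ) {s : ℝ} (hs : 0 ≤ s) :
    0 ≤ comp x n s := by
  induction n generalizing s with
  | zero => exact hs
  | succ n ih => exact ih (T_nonneg (hx _) hs)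

lemma comp_mono {x : ℕ → ℝ} (hx : ∀ i, 0 ≤ x i) (n : ℕ) {s t : ℝ} (hs : 0 ≤ s) (hst : s ≤ t) :
    comp x n s ≤ comp x n t := by
  induction n generalizing s t with
  | zero => exact hst
  | succ n ih => exact ih (T_nonneg (hx _) hs) (T_mono (hx _) hs hst)

lemma comp_le_one {x : ℕ → ℝ} (hx : ∀ i, 0 ≤ x i) (n : ℕ) : comp x n 0 ≤ 1 := by
  cases n with
  | zero => exact zero_le_one
  | succ n =>
    rw [comp_succ']
    exact T_le_one (hx _) (comp_nonneg (fun i => hx (i + 1)) n le_rfl)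

lemma tendsto_comp {x : ℕ → ℝ} (hx : ∀ i, 0 ≤ x i) :
    Tendsto (fun n => comp x n 0) atTop (nhds (⨆ n, comp x n 0)) := by
  apply tendsto_atTop_ciSup
  · exact monotone_nat_of_le_succ fun n => comp_mono hx n le_rfl (T_nonneg (hx _) le_rfl)
  · exact ⟨1, by rintro _ ⟨n, rfl⟩; exact comp_le_one hx n⟩

lemma seq_nonneg {α : ℝ} (hα : 0 < α) (t : ℝ) (i : ℕ) : 0 ≤ seq α t i := by
  unfold _root_.seq; split_ifs <;> linarith

lemma seq_shift (α t : ℝ) (i : ℕ) : seq α t (i + 1) = seq α (2 * t) i := by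
  unfold _root_.seq; rw [pow_succ, mul_assoc]

lemma Y_nonneg {α : ℝ} (hα : 0 < α) (t : ℝ) : 0 ≤ Y α t :=
  Real.iSup_nonneg fun n => comp_nonneg (seq_nonneg hα t) n le_rfl

/-- Self-similarity of `Y` under doubling, that is, under the shift of binary digits. -/
lemma Y_eq {α : ℝ} (hα : 0 < α) (t : ℝ) : Y α t = T (seq α t 1) (Y α (2 * t)) := by
  have h1 := (tendsto_add_atTop_iff_nat 1).2 (tendsto_comp (seq_nonneg hα t))
  have h2 := (continuousAt_T (seq_nonneg hα t 1) (Y_nonneg hα (2 * t))).tendsto.comp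
    (tendsto_comp (seq_nonneg hα (2 * t)))
  refine tendsto_nhds_unique h1 (h2.congr fun n => ?_)
  simp only [Function.comp_apply, comp_succ', seq_shift]

lemma seq_add_half (α t : ℝ) (i : ℕ) : seq α (t + 1 / 2) (i + 1) = seq α t (i + 1) := by
  unfold _root_.seq
  have : (2 : ℝ) ^ (i + 1) * (t + 1 / 2) = 2 ^ (i + 1) * t + ((2 ^ i : ℕ) : ℝ) := by
    push_cast; ring
  rw [this, Int.fract_add_natCast]

/-- `Y` never reads the digit of index `0`, so its period is `1/2` rather than `1`. -/
lemma Y_add_half (α t : ℝ) : Y α (t + 1 / 2) = Y α t := by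
  unfold Y
  congr 1
  ext n
  cases n with
  | zero => rfl
  | succ n => simp only [comp_succ', zero_add, seq_add_half,
      seq_add_half α t 0]

lemma measurable_comp_seq (α : ℝ) (n : ℕ) {g : ℝ → ℝ} (hg : Measurable g) :
    Measurable fun t => comp (seq α t) n (g t) := by
  induction n generalizing g with
  | zero => exact hg
  | succ n ih =>
    have hs : Measurable fun t => seq α t (n + 1) := by
      unfold _root_.seq
      exact Measurable.ite (measurableSet_lt (by fun_prop) (by fun_prop)) measurable_const
        measurable_const
    refine ih (g := fun t => T (seq α t (n + 1)) (g t)) ?_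
    unfold T
    fun_prop

lemma measurable_Y (α : ℝ) : Measurable (Y α) :=
  Measurable.iSup fun n => measurable_comp_seq α n measurable_const

lemma volume_inter_Ico_add (P : Set ℝ) (hP : ∀ t, t + 1 / 2 ∈ P ↔ t ∈ P) :
    volume (P ∩ Ico (1 / 2) 1) = volume (P ∩ Ico 0 (1 / 2)) := by
  rw [← measure_preimage_add_right volume (1 / 2 : ℝ) (P ∩ Ico (1 / 2) 1)]
  congr 1
  ext t
  simp only [mem_preimage, mem_inter_iff, hP, mem_Ico]
  refine and_congr_right fun _ => ⟨fun h => ⟨?_, ?_⟩, fun h => ⟨?_, ?_⟩⟩ <;> linarith [h.1, h.2]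

lemma real_volume_split (P : Set ℝ) {a b c : ℝ} (hab : a ≤ b) (hbc : b ≤ c) :
    volume.real (P ∩ Ico a c) = volume.real (P ∩ Ico a b) + volume.real (P ∩ Ico b c) := by
  have hfin : ∀ x y, volume (P ∩ Ico x y) ≠ ∞ := fun x y =>
    measure_ne_top_of_subset inter_subset_right (by simp)
  have := measureReal_inter_add_sdiff (μ := volume) (s := P ∩ Ico a c)
    (measurableSet_Iio (a := b))
    (hfin a c)
  rw [← this]
  congr 2 <;> ext t <;> simp only [mem_inter_iff, Set.mem_sdiff, mem_Ico, mem_Iio, not_lt]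
  · constructor
    · rintro ⟨⟨h, h1, h2⟩, h3⟩; exact ⟨h, h1, h3⟩
    · rintro ⟨h, h1, h3⟩; exact ⟨⟨h, h1, h3.trans_le hbc⟩, h3⟩
  · constructor
    · rintro ⟨⟨h, h1, h2⟩, h3⟩; exact ⟨h, h3, h2⟩
    · rintro ⟨h, h1, h3⟩; exact ⟨⟨h, hab.trans h1, h3⟩, h1⟩

/-- The invariance equation for the law of `Y`, as a statement about Lebesgue measure. -/
lemma volume_Y_preimage {α : ℝ} (hα : 0 < α) (E : Set ℝ) :
    volume.real (Y α ⁻¹' E ∩ Ico 0 1) =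
      1 / 2 * volume.real (Y α ⁻¹' (T 0 ⁻¹' E) ∩ Ico 0 1) +
        1 / 2 * volume.real (Y α ⁻¹' (T α ⁻¹' E) ∩ Ico 0 1) := by
  have hshift : ∀ B, volume.real (Y α ⁻¹' B ∩ Ico (1 / 2) 1) =
      volume.real (Y α ⁻¹' B ∩ Ico 0 (1 / 2)) := fun B => by
    unfold Measure.real
    rw [volume_inter_Ico_add _ fun t => by simp only [mem_preimage, Y_add_half]]
  have hdouble : ∀ B, volume.real (Y α ⁻¹' B ∩ Ico 0 1) =
      2 * volume.real (Y α ⁻¹' B ∩ Ico 0 (1 / 2)) := fun B => by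
    rw [real_volume_split _ (b := 1 / 2) (by norm_num) (by norm_num), hshift]; ring
  have hscale : ∀ P : Set ℝ, volume.real ((fun t => 2 * t) ⁻¹' P) = 1 / 2 * volume.real P :=
    fun P => by
      unfold Measure.real
      rw [Real.volume_preimage_mul_left two_ne_zero, ENNReal.toReal_mul]
      norm_num
  -- on `[0, 1/4)` the digit of index `1` gives `T 0`, on `[1/4, 1/2)` it gives `T α`
  have e0 : Y α ⁻¹' E ∩ Ico 0 (1 / 4) =
      (fun t => 2 * t) ⁻¹' (Y α ⁻¹' (T 0 ⁻¹' E) ∩ Ico 0 (1 / 2)) := by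
    ext t
    have hI : t ∈ Ico (0 : ℝ) (1 / 4) ↔ 2 * t ∈ Ico (0 : ℝ) (1 / 2) := by
      constructor <;> rintro ⟨h1, h2⟩ <;> constructor <;> linarith
    simp only [mem_preimage, mem_inter_iff, hI]
    refine and_congr_left fun h => ?_
    have : seq α t 1 = 0 := by
      unfold _root_.seq
      rw [pow_one, Int.fract_eq_self.2 ⟨h.1, by linarith [h.2]⟩, if_pos h.2]
    rw [Y_eq hα, this]
  have e1 : Y α ⁻¹' E ∩ Ico (1 / 4) (1 / 2) =
      (fun t => 2 * t) ⁻¹' (Y α ⁻¹' (T α ⁻¹' E) ∩ Ico (1 / 2) 1) := by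
    ext t
    have hI : t ∈ Ico (1 / 4 : ℝ) (1 / 2) ↔ 2 * t ∈ Ico (1 / 2 : ℝ) 1 := by
      constructor <;> rintro ⟨h1, h2⟩ <;> constructor <;> linarith
    simp only [mem_preimage, mem_inter_iff, hI]
    refine and_congr_left fun h => ?_
    have : seq α t 1 = α := by
      unfold _root_.seq
      rw [pow_one, Int.fract_eq_self.2 ⟨by linarith [h.1], h.2⟩, if_neg (not_lt.2 h.1)]
    rw [Y_eq hα, this]
  rw [hdouble, hdouble, hdouble, real_volume_split _ (b := 1 / 4) (by norm_num) (by norm_num),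
    e0, e1, hscale, hscale, hshift]
  ring

theorem stationary_measure_atomless (α : ℝ) (hα : 0 < α) :
    (∀ μ : Measure ℝ, IsProbabilityMeasure μ → μ (Set.Icc 0 (M α)) = 1 →
      μ = (1 / 2 : ℝ≥0∞) • Measure.map (T 0) μ + (1 / 2 : ℝ≥0∞) • Measure.map (T α) μ →
      ∀ s : ℝ, μ {s} = 0) ∧
    ∀ s : ℝ, mu α {s} = 0 := by
  constructor
  · intro μ _ hsupp hstat
    refine real_singleton_eq_zero hα μ ?_ fun s => ?_
    · refine measure_mono_null (fun x hx => ?_) ((prob_compl_eq_zero_iff measurableSet_Icc).2 hsupp)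
      exact fun h => absurd h.1 (not_le.2 hx)
    · have h := congrArg (fun ν : Measure ℝ => (ν {s}).toReal) hstat
      simp only [Measure.add_apply, Measure.smul_apply, smul_eq_mul,
        Measure.map_apply (measurable_T _) (measurableSet_singleton s)] at h
      rw [ENNReal.toReal_add (by finiteness) (by finiteness), ENNReal.toReal_mul,
        ENNReal.toReal_mul] at h
      simpa [Measure.real] using h
  · have hreal : ∀ B, MeasurableSet B →
        (mu α).real B = volume.real (Y α ⁻¹' B ∩ Ico 0 1) := fun B hB => by
      unfold Measure.real mu
      rw [Measure.map_apply (measurable_Y α) hB,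
        Measure.restrict_apply (measurable_Y α hB)]
    have : IsFiniteMeasure (mu α) := by unfold mu; infer_instance
    refine real_singleton_eq_zero hα (mu α) ?_ fun s => ?_
    · have : Y α ⁻¹' Iio 0 = ∅ := by
        ext t; simpa using Y_nonneg hα t
      rw [mu, Measure.map_apply (measurable_Y α) measurableSet_Iio, this, measure_empty]
    · have hs := measurableSet_singleton s
      rw [hreal _ hs, hreal _ (measurable_T 0 hs), hreal _ (measurable_T α hs)]
      exact volume_Y_preimage hα {s}
end

section
/- For all n ≥ 1 and x_1, …, x_n ≥ 0, one has d_n ≥ 1 and c_n ≥ n; consequently, for every t > 0, T_{x_1} ∘ T_{x_2} ∘ ⋯ ∘ T_{x_n}(t) − T_{x_1} ∘ T_{x_2} ∘ ⋯ ∘ T_{x_n}(0) ≤ 1/n. -/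
/-- The matrix `(1, x; 1, 1 + x)`. -/
noncomputable def Mx (x : ℝ) : Matrix (Fin 2) (Fin 2) ℝ := !![1, x; 1, 1 + x]

/-- `P x n = Mx (x 1) * Mx (x 2) * ⋯ * Mx (x n)` (factors multiplied left to right). -/
noncomputable def P (x : ℕ → ℝ) (n : ℕ) : Matrix (Fin 2) (Fin 2) ℝ :=
  ((List.range n).map fun i => Mx (x (i + 1))).prod

lemma P_succ (x : ℕ → ℝ) (n : ℕ) : P x (n + 1) = P x n * Mx (x (n + 1)) := by
  simp [P, List.range_succ]

lemma P_bounds (x : ℕ → ℝ) (n : ℕ) (hx : ∀ i, 1 ≤ i → i ≤ n → 0 ≤ x i) :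
    1 ≤ P x n 1 1 ∧ (n : ℝ) ≤ P x n 1 0 := by
  induction n with
  | zero => simp [P]
  | succ n ih =>
    obtain ⟨hd, hc⟩ := ih fun i h1 h2 => hx i h1 (by omega)
    have h := hx (n + 1) (by omega) le_rfl
    have hn : (0 : ℝ) ≤ n := n.cast_nonneg
    simp only [P_succ, Mx, Matrix.mul_apply, Fin.sum_univ_two, Matrix.of_apply, Matrix.cons_val',
      Matrix.cons_val_zero, Matrix.cons_val_one, Matrix.cons_val_fin_one]
    push_cast
    constructor <;> nlinarith [mul_nonneg (hn.trans hc) h, mul_nonneg (zero_le_one.trans hd) h]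

lemma P_det (x : ℕ → ℝ) (n : ℕ) : (P x n).det = 1 := by
  induction n with
  | zero => simp [P]
  | succ n ih => rw [P_succ, Matrix.det_mul, ih]; simp [Mx, Matrix.det_fin_two]

/-- The composition is the Möbius transformation of the matrix product. Nonnegativity of the `x i`
and of `s` keeps every intermediate denominator positive. -/
lemma comp_eq (x : ℕ → ℝ) (n : ℕ) (hx : ∀ i, 1 ≤ i → i ≤ n → 0 ≤ x i) (s : ℝ) (hs : 0 ≤ s) :
    comp x n s = (P x n 0 0 * s + P x n 0 1) / (P x n 1 0 * s + P x n 1 1) := by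
  induction n generalizing s with
  | zero => simp [P, comp]
  | succ n ih =>
    have h := hx (n + 1) (by omega) le_rfl
    have hx' : ∀ i, 1 ≤ i → i ≤ n → 0 ≤ x i := fun i h1 h2 => hx i h1 (by omega)
    have hpos : 0 < 1 + s + x (n + 1) := by positivity
    rw [comp, ih hx' _ (by unfold T; positivity)]
    simp only [P_succ, Mx, Matrix.mul_apply, Fin.sum_univ_two, Matrix.of_apply, Matrix.cons_val',
      Matrix.cons_val_zero, Matrix.cons_val_one, Matrix.cons_val_fin_one, T]
    rw [← mul_div_mul_right _ _ hpos.ne']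
    congr 1 <;> field_simp <;> ring

theorem entry_growth_and_contraction (n : ℕ) (hn : 1 ≤ n) (x : ℕ → ℝ)
    (hx : ∀ i, 1 ≤ i → i ≤ n → 0 ≤ x i) :
    1 ≤ P x n 1 1 ∧ (n : ℝ) ≤ P x n 1 0 ∧
    ∀ t : ℝ, 0 < t → comp x n t - comp x n 0 ≤ 1 / n := by
  obtain ⟨hd, hc⟩ := P_bounds x n hx
  refine ⟨hd, hc, fun t ht => ?_⟩
  have hdet := P_det x n
  rw [Matrix.det_fin_two] at hdet
  rw [comp_eq x n hx t ht.le, comp_eq x n hx 0 le_rfl]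
  generalize P x n 0 0 = a at *
  generalize P x n 0 1 = b at *
  generalize P x n 1 0 = c at *
  generalize P x n 1 1 = d at *
  have hn0 : (0 : ℝ) < n := by exact_mod_cast hn
  have hc0 : 0 < c := hn0.trans_le hc
  have hd0 : 0 < d := by linarith
  have hct : 0 < c * t + d := by positivity
  have key : (a * t + b) / (c * t + d) - (a * 0 + b) / (c * 0 + d) = t / ((c * t + d) * d) := by
    rw [mul_zero, mul_zero, zero_add, zero_add, div_sub_div _ _ hct.ne' hd0.ne']
    congr 1
    linear_combination t * hdet
  rw [key, div_le_div_iff₀ (by positivity) hn0]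
  nlinarith [mul_le_mul_of_nonneg_right hc ht.le, mul_le_mul_of_nonneg_left hd hct.le]
end

section
/- Let α > 0, let F_0 : ℝ → ℝ be defined by F_0(s) = min(1, max(0, s/M_α)), and for s ∈ [0, M_α] define (K_α F_0)(s) = (1/2)·F_0(s/(1−s)) + (1/2)·F_0(s/(1−s) − α) (note s/(1−s) = T_0^{−1}(s)). Then (K_α F_0)(s) ≤ F_0(s) for all s ∈ [0, M_α] if and only if α ≥ 1/6. -/
/-- The c.d.f. of the uniform distribution on `[0, M α]`. -/
noncomputable def F0 (α s : ℝ) : ℝ := min 1 (max 0 (s / M α))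

/-- One step of the operator `K_α` applied to `F0`:
`(K_α F)(s) = (1/2) F(T_0⁻¹ s) + (1/2) F(T_0⁻¹ s − α)`, where `T_0⁻¹ s = s / (1 − s)`. -/
noncomputable def KF0 (α s : ℝ) : ℝ :=
  (1 / 2) * F0 α (s / (1 - s)) + (1 / 2) * F0 α (s / (1 - s) - α)

theorem M_sq_add (α : ℝ) (hα : 0 < α) : M α ^ 2 + α * M α = α := by
  have h := Real.sq_sqrt (show 0 ≤ α ^ 2 + 4 * α by positivity)
  unfold M
  linarith

theorem M_pos (α : ℝ) (hα : 0 < α) : 0 < M α := by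
  have h : α < Real.sqrt (α ^ 2 + 4 * α) := Real.lt_sqrt_of_sq_lt (by linarith)
  unfold M
  linarith

theorem M_lt_one (α : ℝ) (hα : 0 < α) : M α < 1 := by
  nlinarith [M_sq_add α hα, M_pos α hα]

theorem M_le_two_mul_iff (α : ℝ) (hα : 0 < α) : M α ≤ 2 * α ↔ 1 / 6 ≤ α := by
  have h := M_sq_add α hα
  have hm := M_pos α hα
  constructor
  · intro h2
    have : α * 1 ≤ α * (6 * α) := by nlinarith
    linarith [le_of_mul_le_mul_left this hα]
  · intro h6
    by_contra! h2
    nlinarith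

theorem F0_le_one (α y : ℝ) : F0 α y ≤ 1 := min_le_left _ _

theorem F0_le_div (α y : ℝ) (hα : 0 < α) (hy : 0 ≤ y) : F0 α y ≤ y / M α :=
  (min_le_right _ _).trans (max_le (div_nonneg hy (M_pos α hα).le) le_rfl)

theorem F0_nonpos (α y : ℝ) (hα : 0 < α) (hy : y ≤ 0) : F0 α y ≤ 0 :=
  (min_le_right _ _).trans (max_le le_rfl (div_nonpos_of_nonpos_of_nonneg hy (M_pos α hα).le))

theorem F0_eq_div (α y : ℝ) (hα : 0 < α) (h0 : 0 ≤ y) (h1 : y ≤ M α) : F0 α y = y / M α := by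
  have hm := M_pos α hα
  rw [F0, max_eq_right (by positivity), min_eq_right ((div_le_one hm).2 h1)]

/-- Domination in the coordinate `x = s / (1 - s)`, cleared of denominators: here `u` and
`v` stand for the numerators of upper bounds of the two terms of `KF0`. -/
theorem KF0_le_of_bounds (α x u v : ℝ) (hα : 0 < α)
    (hu : F0 α x ≤ u / M α) (hv : F0 α (x - α) ≤ v / M α) (hx : 0 ≤ x)
    (h : (u + v) * (1 + x) ≤ 2 * x) :
    (1 / 2) * F0 α x + (1 / 2) * F0 α (x - α) ≤ x / (1 + x) / M α := by
  have hm := M_pos α hα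
  have h1 : (u + v) / 2 ≤ x / (1 + x) := by
    rw [le_div_iff₀ (by linarith)]
    linarith
  calc (1 / 2) * F0 α x + (1 / 2) * F0 α (x - α)
      ≤ (1 / 2) * (u / M α) + (1 / 2) * (v / M α) := by linarith
    _ = (u + v) / 2 / M α := by ring
    _ ≤ _ := div_le_div_of_nonneg_right h1 hm.le

theorem one_step_domination_iff (α : ℝ) (hα : 0 < α) :
    (∀ s ∈ Set.Icc 0 (M α), KF0 α s ≤ F0 α s) ↔ 1 / 6 ≤ α := by
  have hq := M_sq_add α hα
  have hm := M_pos α hα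
  have hm1 := M_lt_one α hα
  rw [← M_le_two_mul_iff α hα]
  constructor
  · intro H
    by_contra! h2
    have hs0 : 0 ≤ M α / (1 + M α) := by positivity
    have hs1 : M α / (1 + M α) ≤ M α := div_le_self hm.le (by linarith)
    have h := H (M α / (1 + M α)) ⟨hs0, hs1⟩
    have hx : M α / (1 + M α) / (1 - M α / (1 + M α)) = M α := by
      field_simp
      ring
    rw [KF0, hx, F0_eq_div α _ hα hs0 hs1, F0_eq_div α _ hα hm.le le_rfl,
      F0_eq_div α _ hα (by linarith) (by linarith)] at h
    field_simp at h
    nlinarith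
  · rintro h2 s ⟨hs0, hs1⟩
    have h1s : 0 < 1 - s := by linarith
    rw [KF0, F0_eq_div α s hα hs0 hs1]
    obtain ⟨x, hx⟩ : ∃ x, x = s / (1 - s) := ⟨_, rfl⟩
    have hx0 : 0 ≤ x := hx ▸ div_nonneg hs0 h1s.le
    have hsx : s = x / (1 + x) := by
      rw [hx]
      field_simp
      ring
    have hxm : x ≤ M α + α := by
      rw [hx, div_le_iff₀ h1s]
      nlinarith
    rw [← hx, hsx]
    have hu1 : F0 α x ≤ M α / M α := by
      rw [div_self hm.ne']
      exact F0_le_one α x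
    have hv0 (h : x ≤ α) : F0 α (x - α) ≤ 0 / M α := by
      rw [zero_div]
      exact F0_nonpos α _ hα (by linarith)
    rcases le_total x (M α) with hxM | hxM <;> rcases le_total x α with hxa | hxa
    · exact KF0_le_of_bounds α x x 0 hα (F0_le_div α x hα hx0) (hv0 hxa) hx0 (by nlinarith)
    · refine KF0_le_of_bounds α x x (x - α) hα (F0_le_div α x hα hx0)
        (F0_le_div α _ hα (by linarith)) hx0 ?_
      -- The claim is `x * (2 * x - α) ≤ α`, and its left side is increasing for `x ≥ α`;
      -- at `x = M α` it is at most `α` because `M α ≤ 2 * α`.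
      have h3 : x * (2 * x - α) ≤ M α * (2 * M α - α) :=
        mul_le_mul hxM (by linarith) (by linarith) hm.le
      nlinarith
    · exact KF0_le_of_bounds α x (M α) 0 hα hu1 (hv0 hxa) hx0 (by nlinarith)
    · refine KF0_le_of_bounds α x (M α) (x - α) hα hu1 (F0_le_div α _ hα (by linarith)) hx0 ?_
      -- The quadratic `(M α + x - α) * (1 + x) - 2 * x` has the roots `M α + α` and
      -- `(M α - α) / (M α + α)`, and `x ≥ M α` is not below the second one.
      have h3 : 0 ≤ x * (M α + α) - (M α - α) := by nlinarith
      have h4 : 0 ≤ (M α + α - x) * (x * (M α + α) - (M α - α)) :=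
        mul_nonneg (by linarith) h3
      have h5 : (M α + α - x) * (x * (M α + α) - (M α - α))
          = (M α + α) * (2 * x - (M α + (x - α)) * (1 + x)) := by
        linear_combination (2 * x) * hq
      rw [h5] at h4
      linarith [nonneg_of_mul_nonneg_right h4 (by linarith : 0 < M α + α)]
end

section
/- Let α > 0 and let R(α) be the 4×4 real matrix R(α) = (1/2)·(M_0 ⊗ M_0) + (1/2)·(M_α ⊗ M_α), where M_x denotes the 2×2 matrix (1, x; 1, 1+x) and ⊗ the Kronecker (tensor) product. Then the characteristic polynomial of R(α) is t⁴ − (4 + 2α + α²/2)t³ + (6 + 4α + α²/2)t² − (4 + 2α)t + 1, and R(α) has a real eigenvalue strictly greater than 2 if and only if α > √6/2 − 1. -/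
/-!
The characteristic polynomial is a direct determinant computation. With `u = t - 1` it factors as
`u * (u ^ 3 - 2 * α * (u + 1) * u - α ^ 2 / 2 * (u + 1) ^ 2)`, the root `u = 0` coming from the
antisymmetric vectors, on which `M_0 ⊗ M_0` and `M_α ⊗ M_α` act by `det M_0 = det M_α = 1`.

Divided by `u ^ 3`, the cubic factor is strictly increasing in `u > 0`; at `u = 1` it equals
`1 - 4 * α - 2 * α ^ 2`, and it tends to `1`. Hence there is a root `u > 1`, that is `t > 2`,
exactly when `1 - 4 * α - 2 * α ^ 2 < 0`, which for `α > 0` means `α > √6 / 2 - 1`.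
-/

open Kronecker Polynomial

/-- `R α = (1/2) (M_0 ⊗ M_0) + (1/2) (M_α ⊗ M_α)`. -/
noncomputable def R (α : ℝ) : Matrix (Fin 2 × Fin 2) (Fin 2 × Fin 2) ℝ :=
  (1 / 2 : ℝ) • (Mx 0 ⊗ₖ Mx 0) + (1 / 2 : ℝ) • (Mx α ⊗ₖ Mx α)

lemma R_reindex (α : ℝ) :
    Matrix.reindex finProdFinEquiv finProdFinEquiv (R α) =
      !![1, α / 2, α / 2, α ^ 2 / 2;
         1, 1 + α / 2, α / 2, α * (1 + α) / 2;
         1, α / 2, 1 + α / 2, α * (1 + α) / 2;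
         1, 1 + α / 2, 1 + α / 2, (1 + (1 + α) ^ 2) / 2] := by
  ext i j
  fin_cases i <;> fin_cases j <;>
    simp [R, Mx, finProdFinEquiv, Fin.divNat, Fin.modNat] <;> ring

lemma R_charpoly (α : ℝ) :
    (R α).charpoly =
      X ^ 4 - C (4 + 2 * α + α ^ 2 / 2) * X ^ 3 + C (6 + 4 * α + α ^ 2 / 2) * X ^ 2
        - C (4 + 2 * α) * X + 1 := by
  rw [← Matrix.charpoly_reindex finProdFinEquiv (R α), R_reindex]
  -- Two polynomials over the infinite field `ℝ` agree once their values do.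
  refine Polynomial.funext fun t => ?_
  rw [Matrix.eval_charpoly, Matrix.det_succ_row_zero]
  simp [Matrix.det_fin_three, Fin.sum_univ_succ, Matrix.submatrix, Fin.succAbove]
  ring

lemma R_hasEigenvalue_iff (α t : ℝ) :
    Module.End.HasEigenvalue (Matrix.toLin' (R α)) t ↔
      (t - 1) * ((t - 1) ^ 3 - 2 * α * t * (t - 1) - α ^ 2 / 2 * t ^ 2) = 0 := by
  rw [Module.End.hasEigenvalue_iff_isRoot_charpoly, Matrix.charpoly_toLin', R_charpoly,
    Polynomial.IsRoot.def]
  simp only [eval_add, eval_sub, eval_mul, eval_pow, eval_X, eval_C, eval_one]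
  constructor <;> intro h <;> linear_combination h

/-- For `α > 0` the threshold `√6 / 2 - 1` is the positive root of `2 α ^ 2 + 4 α - 1`. -/
lemma threshold_iff (α : ℝ) (hα : 0 < α) :
    Real.sqrt 6 / 2 - 1 < α ↔ 1 < 4 * α + 2 * α ^ 2 := by
  have h : Real.sqrt 6 / 2 - 1 < α ↔ Real.sqrt 6 < 2 * (α + 1) := by
    constructor <;> intro h <;> linarith
  rw [h, Real.sqrt_lt' (by linarith)]
  constructor <;> intro h <;> nlinarith

theorem charpoly_and_eigenvalue_criterion (α : ℝ) (hα : 0 < α) :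
    (R α).charpoly =
      X ^ 4 - C (4 + 2 * α + α ^ 2 / 2) * X ^ 3 + C (6 + 4 * α + α ^ 2 / 2) * X ^ 2
        - C (4 + 2 * α) * X + 1 ∧
    ((∃ t : ℝ, 2 < t ∧ Module.End.HasEigenvalue (Matrix.toLin' (R α)) t) ↔
      Real.sqrt 6 / 2 - 1 < α) := by
  refine ⟨R_charpoly α, ?_⟩
  rw [threshold_iff α hα]
  simp only [R_hasEigenvalue_iff]
  constructor
  · rintro ⟨t, ht, h⟩
    obtain ⟨u, rfl⟩ : ∃ u, t = u + 1 := ⟨t - 1, by ring⟩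
    have hu : 1 < u := by linarith
    have hq := (mul_eq_zero.mp h).resolve_left (by linarith)
    have h1 : u < u ^ 2 := by nlinarith
    have h2 : u ^ 2 < u ^ 3 := by nlinarith
    have h3 : 0 < u ^ 3 := by positivity
    -- The cubic equation bounds `u ^ 3` by `(4 * α + 2 * α ^ 2) * u ^ 3`.
    have h4 : α * ((u + 1) * u) < α * (2 * u ^ 3) :=
      mul_lt_mul_of_pos_left (by nlinarith) hα
    have h5 : α ^ 2 * (u + 1) ^ 2 < α ^ 2 * (4 * u ^ 3) :=
      mul_lt_mul_of_pos_left (by nlinarith) (by positivity)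
    have h6 : 1 * u ^ 3 < (4 * α + 2 * α ^ 2) * u ^ 3 := by
      ring_nf at hq h4 h5 ⊢
      linarith
    exact lt_of_mul_lt_mul_right h6 h3.le
  · intro h
    let q : ℝ → ℝ := fun t => (t - 1) ^ 3 - 2 * α * t * (t - 1) - α ^ 2 / 2 * t ^ 2
    have hc : Continuous q := by fun_prop
    -- With `b = 4 * α + 2 * α ^ 2` and `u ≥ 1`, the cubic is at least `u ^ 2 * (u - b)`,
    -- hence positive at `u = 1 + b`.
    let b : ℝ := 4 * α + 2 * α ^ 2
    have hb : 0 < b := by positivity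
    have h2 : q 2 < 0 := by simp only [q]; nlinarith
    have hpos : 0 < q (2 + b) := by
      have e : q (2 + b) = (1 + b) ^ 2
          + 2 * α * ((1 + b) * b) + α ^ 2 / 2 * (b * (4 + 3 * b)) := by
        simp only [q, b]; ring
      rw [e]; positivity
    obtain ⟨t, ht, hqt⟩ :=
      intermediate_value_Ioo (by linarith : (2 : ℝ) ≤ 2 + b) hc.continuousOn ⟨h2, hpos⟩
    exact ⟨t, ht.1, mul_eq_zero_of_right _ hqt⟩
end
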